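/- arXiv:1901.05645 — 3 statements merged into one kernel-verified Lean document; each statement's English description precedes it below -/
import Mathlib

section
/- For every open pooling set P = ⋃_i (ξ_i, ζ_i) and every θ ∈ [0,1]: Γ_P(θ) = Γ_∅(θ) if and only if θ does not lie in any of the open intervals (ξ_i, ζ_i) (intervals of the real line); moreover, Γ_P(θ) < Γ_∅(θ) whenever θ ∈ (ξ_i, ζ_i) for some i. -/
open MeasureTheory Set
open scoped Classical

noncomputable section

/-- CDF associated with the density `f` (relevant on `[0,1]`): `F(x) = ∫_0^x f`. -/
def cdfF (f : ℝ → ℝ) (x : ℝ) : ℝ := ∫ t in (0:ℝ)..x, f t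

/-- Conditional mean `E_F[θ | (ξ,ζ)]` of `θ` on the interval `(ξ, ζ)` under density `f`. -/
def condMean (f : ℝ → ℝ) (ξ ζ : ℝ) : ℝ :=
  (∫ t in ξ..ζ, t * f t) / (∫ t in ξ..ζ, f t)

/-- `f` is a strictly positive density of a probability measure on `[0,1]`. -/
def IsDensity (f : ℝ → ℝ) : Prop :=
  (∀ θ ∈ Icc (0:ℝ) 1, 0 < f θ) ∧ IntegrableOn f (Icc (0:ℝ) 1) ∧
    (∫ t in (0:ℝ)..1, f t) = 1

/-- An open pooling set: a relatively open subset of `[0,1]`. -/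
def IsPoolingSet (P : Set ℝ) : Prop :=
  ∃ U : Set ℝ, IsOpen U ∧ P = U ∩ Icc (0:ℝ) 1

/-- Left endpoint `ξ_i` of the interval component of `θ` in `P`. -/
def compInf (P : Set ℝ) (θ : ℝ) : ℝ := sInf (connectedComponentIn P θ)

/-- Right endpoint `ζ_i` of the interval component of `θ` in `P`. -/
def compSup (P : Set ℝ) (θ : ℝ) : ℝ := sSup (connectedComponentIn P θ)

/-- The posterior-mean map induced by the pooling set `P`: states in a pooled
interval are mapped to the conditional mean of that interval, other states to
themselves. -/
def poolMean (f : ℝ → ℝ) (P : Set ℝ) (θ : ℝ) : ℝ :=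
  if θ ∈ P then condMean f (compInf P θ) (compSup P θ) else θ

/-- The induced distribution `G_P` of posterior means. -/
def Gp (f : ℝ → ℝ) (P : Set ℝ) (θ : ℝ) : ℝ :=
  if θ ∈ P then
    (if θ < condMean f (compInf P θ) (compSup P θ) then cdfF f (compInf P θ)
     else cdfF f (compSup P θ))
  else cdfF f θ

/-- `Γ_P(θ) = ∫_0^θ G_P(t) dt`. -/
def Gam (f : ℝ → ℝ) (P : Set ℝ) (θ : ℝ) : ℝ := ∫ t in (0:ℝ)..θ, Gp f P t

/-- The value `∫_0^1 u(θ) dG_P(θ)` of the pooling set `P` under payoff `u`,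
written as the expectation of `u` composed with the posterior-mean map. -/
def poolValue (f : ℝ → ℝ) (u : ℝ → ℝ) (P : Set ℝ) : ℝ :=
  ∫ θ in (0:ℝ)..1, u (poolMean f P θ) * f θ

/-- `P` is an optimal pooling set for `u`. -/
def IsOptimal (f : ℝ → ℝ) (u : ℝ → ℝ) (P : Set ℝ) : Prop :=
  IsPoolingSet P ∧ ∀ Q : Set ℝ, IsPoolingSet Q → poolValue f u Q ≤ poolValue f u P

lemma dens_ii {f : ℝ → ℝ} (hf : IsDensity f) {a b : ℝ} (ha : a ∈ Icc (0:ℝ) 1)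
    (hb : b ∈ Icc (0:ℝ) 1) : IntervalIntegrable f volume a b := by
  have h : IntegrableOn f (uIcc a b) := hf.2.1.mono_set ((convex_Icc (0:ℝ) 1).ordConnected.uIcc_subset ha hb)
  exact h.intervalIntegrable

lemma cdfF_sub {f : ℝ → ℝ} (hf : IsDensity f) {a b : ℝ} (ha : a ∈ Icc (0:ℝ) 1)
    (hb : b ∈ Icc (0:ℝ) 1) : cdfF f b - cdfF f a = ∫ t in a..b, f t := by
  have h0 : (0:ℝ) ∈ Icc (0:ℝ) 1 := by simp
  exact intervalIntegral.integral_interval_sub_left (dens_ii hf h0 hb) (dens_ii hf h0 ha)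

lemma cdfF_lt {f : ℝ → ℝ} (hf : IsDensity f) {a b : ℝ} (ha : a ∈ Icc (0:ℝ) 1)
    (hb : b ∈ Icc (0:ℝ) 1) (hab : a < b) : cdfF f a < cdfF f b := by
  have h := intervalIntegral.intervalIntegral_pos_of_pos_on (dens_ii hf ha hb)
    (fun x hx => hf.1 x ⟨ha.1.trans hx.1.le, hx.2.le.trans hb.2⟩) hab
  rw [← cdfF_sub hf ha hb] at h
  linarith

lemma cdfF_mem {f : ℝ → ℝ} (hf : IsDensity f) {a : ℝ} (ha : a ∈ Icc (0:ℝ) 1) :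
    cdfF f a ∈ Icc (0:ℝ) 1 := by
  have h0 : cdfF f 0 = 0 := by simp [cdfF]
  have h1 : cdfF f 1 = 1 := hf.2.2
  constructor
  · rcases ha.1.eq_or_lt with h | h
    · rw [← h, h0]
    · rw [← h0]; exact (cdfF_lt hf (by simp) ha h).le
  · rcases ha.2.eq_or_lt with h | h
    · rw [h, h1]
    · rw [← h1]; exact (cdfF_lt hf ha (by simp) h).le

lemma cdfF_cont {f : ℝ → ℝ} (hf : IsDensity f) : ContinuousOn (cdfF f) (Icc (0:ℝ) 1) := by
  have h : IntegrableOn f (uIcc (0:ℝ) 1) := by rw [uIcc_of_le zero_le_one]; exact hf.2.1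
  have := intervalIntegral.continuousOn_primitive_interval h
  rwa [uIcc_of_le zero_le_one] at this

lemma cdfF_ii {f : ℝ → ℝ} (hf : IsDensity f) {a b : ℝ} (ha : a ∈ Icc (0:ℝ) 1)
    (hb : b ∈ Icc (0:ℝ) 1) : IntervalIntegrable (cdfF f) volume a b :=
  ((cdfF_cont hf).mono ((convex_Icc (0:ℝ) 1).ordConnected.uIcc_subset ha hb)).intervalIntegrable

/-- Integration by parts for the cdf. -/
lemma parts {f : ℝ → ℝ} (hf : IsDensity f) {a b : ℝ} (ha : a ∈ Icc (0:ℝ) 1)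
    (hb : b ∈ Icc (0:ℝ) 1) :
    ∫ t in a..b, cdfF f t = b * cdfF f b - a * cdfF f a - ∫ t in a..b, t * f t := by
  have h0 : (0:ℝ) ∈ uIcc (0:ℝ) 1 := by simp
  have hsub : uIcc a b ⊆ Icc (0:ℝ) 1 := (convex_Icc (0:ℝ) 1).ordConnected.uIcc_subset ha hb
  have hi : IntervalIntegrable f volume 0 1 := dens_ii hf (by simp) (by simp)
  have hac : AbsolutelyContinuousOnInterval (cdfF f) a b := by
    have h1 := (dens_ii hf ha hb).absolutelyContinuousOnInterval_intervalIntegral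
      (c := a) (by simp)
    have h2 : AbsolutelyContinuousOnInterval (fun _ : ℝ => cdfF f a) a b :=
      (contDiffOn_const (n := 1)).absolutelyContinuousOnInterval
    have h3 := h1.fun_add h2
    unfold AbsolutelyContinuousOnInterval at h3 ⊢
    refine h3.congr' ?_
    unfold AbsolutelyContinuousOnInterval.totalLengthFilter
    rw [Filter.EventuallyEq, Filter.eventually_inf_principal]
    refine Filter.Eventually.of_forall fun E hE => ?_
    refine Finset.sum_congr rfl fun i hi => ?_
    have hm := hE.1 i hi
    have e : ∀ x ∈ uIcc a b, (∫ v in a..x, f v) + cdfF f a = cdfF f x := fun x hx => by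
      rw [← cdfF_sub hf ha (hsub hx)]; ring
    beta_reduce
    rw [e _ hm.1, e _ hm.2]
  have hid : AbsolutelyContinuousOnInterval (fun x : ℝ => x) a b :=
    (contDiff_id (n := 1)).contDiffOn.absolutelyContinuousOnInterval
  have key := hid.integral_mul_deriv_eq_deriv_mul hac
  have e1 : ∫ x in a..b, x * deriv (cdfF f) x = ∫ t in a..b, t * f t := by
    apply intervalIntegral.integral_congr_ae
    filter_upwards [hi.ae_hasDerivAt_integral] with x hx hx2
    have := hx (by rw [uIcc_of_le zero_le_one]; exact hsub (uIoc_subset_uIcc hx2)) 0 h0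
    rw [show deriv (cdfF f) x = f x from this.deriv]
  have e2 : ∫ x in a..b, deriv (fun x : ℝ => x) x * cdfF f x = ∫ x in a..b, cdfF f x := by
    simp
  rw [e1, e2] at key
  linarith

lemma tf_ii {f : ℝ → ℝ} (hf : IsDensity f) {a b : ℝ} (ha : a ∈ Icc (0:ℝ) 1)
    (hb : b ∈ Icc (0:ℝ) 1) : IntervalIntegrable (fun t => t * f t) volume a b :=
  (dens_ii hf ha hb).continuousOn_mul continuousOn_id

lemma condMean_mem {f : ℝ → ℝ} (hf : IsDensity f) {a b : ℝ} (ha : a ∈ Icc (0:ℝ) 1)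
    (hb : b ∈ Icc (0:ℝ) 1) (hab : a < b) : condMean f a b ∈ Ioo a b := by
  have hfp : ∀ x ∈ Ioo a b, 0 < f x := fun x hx => hf.1 x ⟨ha.1.trans hx.1.le, hx.2.le.trans hb.2⟩
  have hp := intervalIntegral.intervalIntegral_pos_of_pos_on (dens_ii hf ha hb) hfp hab
  have h1 : 0 < ∫ t in a..b, (t * f t - a * f t) :=
    intervalIntegral.intervalIntegral_pos_of_pos_on
      ((tf_ii hf ha hb).sub ((dens_ii hf ha hb).const_mul a))
      (fun x hx => by nlinarith [hfp x hx, hx.1, mul_pos (sub_pos.2 hx.1) (hfp x hx)]) hab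
  have h2 : 0 < ∫ t in a..b, (b * f t - t * f t) :=
    intervalIntegral.intervalIntegral_pos_of_pos_on
      (((dens_ii hf ha hb).const_mul b).sub (tf_ii hf ha hb))
      (fun x hx => by nlinarith [hfp x hx, hx.1, mul_pos (sub_pos.2 hx.2) (hfp x hx)]) hab
  rw [intervalIntegral.integral_sub (tf_ii hf ha hb) ((dens_ii hf ha hb).const_mul a),
    intervalIntegral.integral_const_mul] at h1
  rw [intervalIntegral.integral_sub ((dens_ii hf ha hb).const_mul b) (tf_ii hf ha hb),
    intervalIntegral.integral_const_mul] at h2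
  unfold condMean
  constructor
  · rw [lt_div_iff₀ hp]; linarith
  · rw [div_lt_iff₀ hp]; linarith

/-- The deviation `G_P - F`. -/
def gdev (f : ℝ → ℝ) (P : Set ℝ) (t : ℝ) : ℝ := Gp f P t - cdfF f t

lemma comp_facts {P : Set ℝ} (hP : IsPoolingSet P) {x : ℝ} (hx : x ∈ P) :
    compInf P x ∈ Icc (0:ℝ) 1 ∧ compSup P x ∈ Icc (0:ℝ) 1 ∧ compInf P x < compSup P x ∧
    Ioo (compInf P x) (compSup P x) ⊆ connectedComponentIn P x ∧
    connectedComponentIn P x ⊆ Icc (compInf P x) (compSup P x) := by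
  obtain ⟨U, hU, rfl⟩ := hP
  set P := U ∩ Icc (0:ℝ) 1 with hPdef
  have hC01 : connectedComponentIn P x ⊆ Icc (0:ℝ) 1 :=
    (connectedComponentIn_subset P x).trans inter_subset_right
  have hxC : x ∈ connectedComponentIn P x := mem_connectedComponentIn hx
  have hb : BddBelow (connectedComponentIn P x) := bddBelow_Icc.mono hC01
  have ha : BddAbove (connectedComponentIn P x) := bddAbove_Icc.mono hC01
  have hconn : IsConnected (connectedComponentIn P x) := isConnected_connectedComponentIn_iff.2 hx
  have hx01 := hC01 hxC
  have hI : ∀ y ∈ connectedComponentIn P x, compInf P x ≤ y ∧ y ≤ compSup P x :=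
    fun y hy => ⟨csInf_le hb hy, le_csSup ha hy⟩
  refine ⟨⟨le_csInf ⟨x, hxC⟩ fun y hy => (hC01 hy).1, (hI x hxC).1.trans hx01.2⟩,
    ⟨hx01.1.trans (hI x hxC).2, csSup_le ⟨x, hxC⟩ fun y hy => (hC01 hy).2⟩, ?_,
    hconn.Ioo_csInf_csSup_subset hb ha, hI⟩
  obtain ⟨ε, hε, hball⟩ := Metric.isOpen_iff.1 hU x hx.1
  rw [Real.ball_eq_Ioo] at hball
  have hpre : IsPreconnected (Ioo (x - ε) (x + ε) ∩ Icc (0:ℝ) 1) :=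
    (ordConnected_Ioo.inter ordConnected_Icc).isPreconnected
  have hsub := hpre.subset_connectedComponentIn (x := x) (F := P)
    ⟨⟨by linarith, by linarith⟩, hx01⟩ (inter_subset_inter_left _ hball)
  rcases hx01.2.lt_or_eq with h | h
  · have hlt : x < min (x + ε / 2) 1 := lt_min (by linarith) h
    have hm : min (x + ε / 2) 1 ∈ connectedComponentIn P x :=
      hsub ⟨⟨by linarith, (min_le_left _ _).trans_lt (by linarith)⟩,
        by linarith [hx01.1], min_le_right _ _⟩
    linarith [(hI x hxC).1, (hI _ hm).2]
  · have hlt : max (x - ε / 2) 0 < x := max_lt (by linarith) (by linarith)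
    have hm : max (x - ε / 2) 0 ∈ connectedComponentIn P x :=
      hsub ⟨⟨lt_of_lt_of_le (by linarith) (le_max_left _ _), by linarith⟩,
        le_max_right _ _, by linarith⟩
    linarith [(hI x hxC).2, (hI _ hm).1]

lemma Gp_comp {f : ℝ → ℝ} {P : Set ℝ} {x t : ℝ} (ht : t ∈ connectedComponentIn P x) :
    Gp f P t = if t < condMean f (compInf P x) (compSup P x) then cdfF f (compInf P x)
      else cdfF f (compSup P x) := by
  have h := connectedComponentIn_eq ht
  have htP := connectedComponentIn_subset P x ht
  have hI : compInf P t = compInf P x := by rw [compInf, compInf, h]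
  have hS : compSup P t = compSup P x := by rw [compSup, compSup, h]
  rw [Gp, if_pos htP, hI, hS]

lemma gdev_off {f : ℝ → ℝ} {P : Set ℝ} {t : ℝ} (ht : t ∉ P) : gdev f P t = 0 := by
  simp [gdev, Gp, ht]

/-- The family of components. -/
def comps (P : Set ℝ) : Set (Set ℝ) := connectedComponentIn P '' P

lemma comps_disj (P : Set ℝ) : (comps P).PairwiseDisjoint id := by
  rintro _ ⟨x, hx, rfl⟩ _ ⟨y, hy, rfl⟩ hne
  rw [Function.onFun, Set.disjoint_left]
  intro z hz1 hz2
  exact hne ((connectedComponentIn_eq hz1).trans (connectedComponentIn_eq hz2).symm)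

lemma comps_countable {P : Set ℝ} (hP : IsPoolingSet P) : (comps P).Countable := by
  refine (comps_disj P).countable_of_nonempty_interior ?_
  rintro _ ⟨x, hx, rfl⟩
  obtain ⟨h1, h2, h3, h4, h5⟩ := comp_facts hP hx
  exact (nonempty_Ioo.2 h3).mono (isOpen_Ioo.subset_interior_iff.2 h4)

lemma comps_union (P : Set ℝ) : (⋃ C : comps P, (C : Set ℝ)) = P := by
  ext z
  simp only [mem_iUnion]
  constructor
  · rintro ⟨⟨_, ⟨x, hx, rfl⟩⟩, hz⟩
    exact connectedComponentIn_subset P x hz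
  · intro hz
    exact ⟨⟨_, ⟨z, hz, rfl⟩⟩, mem_connectedComponentIn hz⟩

lemma comps_meas {P : Set ℝ} (C : comps P) : MeasurableSet (C : Set ℝ) := by
  obtain ⟨_, ⟨x, hx, rfl⟩⟩ := C
  exact (isPreconnected_connectedComponentIn.ordConnected).measurableSet

lemma pool_meas {P : Set ℝ} (hP : IsPoolingSet P) : MeasurableSet P := by
  obtain ⟨U, hU, rfl⟩ := hP
  exact hU.measurableSet.inter measurableSet_Icc

lemma gdev_int {f : ℝ → ℝ} (hf : IsDensity f) {P : Set ℝ} (hP : IsPoolingSet P) :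
    IntegrableOn (gdev f P) (Icc (0:ℝ) 1) := by
  have hP01 : P ⊆ Icc (0:ℝ) 1 := by obtain ⟨U, hU, rfl⟩ := hP; exact inter_subset_right
  suffices h : IntegrableOn (gdev f P) P from
    h.of_forall_sdiff_eq_zero measurableSet_Icc fun t ht => gdev_off ht.2
  have hfin : volume P < ⊤ := (measure_mono hP01).trans_lt (by simp)
  have hmeas : AEStronglyMeasurable (gdev f P) (volume.restrict P) := by
    have := (comps_countable hP).to_subtype
    have hu : AEStronglyMeasurable (gdev f P) (volume.restrict (⋃ C : comps P, (C : Set ℝ))) := by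
      refine AEStronglyMeasurable.iUnion fun C => ?_
      have hCm := comps_meas C
      obtain ⟨_, ⟨x, hx, rfl⟩⟩ := C
      have hFm : AEStronglyMeasurable (cdfF f) (volume.restrict (connectedComponentIn P x)) :=
        ((cdfF_cont hf).mono ((connectedComponentIn_subset P x).trans hP01)).aestronglyMeasurable hCm
      have hGm : AEStronglyMeasurable (fun t =>
          if t < condMean f (compInf P x) (compSup P x) then cdfF f (compInf P x)
          else cdfF f (compSup P x)) (volume.restrict (connectedComponentIn P x)) :=
        (Measurable.ite measurableSet_Iio measurable_const measurable_const).aestronglyMeasurable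
      refine (hGm.sub hFm).congr ?_
      refine (ae_restrict_iff' hCm).2 (Filter.Eventually.of_forall fun t ht => ?_)
      simp only [gdev, Gp_comp ht, Pi.sub_apply]
    rwa [comps_union] at hu
  refine IntegrableOn.of_bound hfin hmeas 1 ?_
  refine (ae_restrict_iff' (pool_meas hP)).2 (Filter.Eventually.of_forall fun t ht => ?_)
  obtain ⟨h1, h2, h3, h4, h5⟩ := comp_facts hP ht
  have a1 := cdfF_mem hf h1
  have a2 := cdfF_mem hf h2
  have a3 := cdfF_mem hf (hP01 ht)
  rw [gdev, Gp_comp (mem_connectedComponentIn ht), Real.norm_eq_abs, abs_le]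
  split_ifs
  · constructor <;> linarith [a1.1, a1.2, a3.1, a3.2]
  · constructor <;> linarith [a2.1, a2.2, a3.1, a3.2]

lemma gdev_ii {f : ℝ → ℝ} (hf : IsDensity f) {P : Set ℝ} (hP : IsPoolingSet P) {a b : ℝ}
    (ha : a ∈ Icc (0:ℝ) 1) (hb : b ∈ Icc (0:ℝ) 1) :
    IntervalIntegrable (gdev f P) volume a b := by
  have h : IntegrableOn (gdev f P) (uIcc a b) :=
    (gdev_int hf hP).mono_set ((convex_Icc (0:ℝ) 1).ordConnected.uIcc_subset ha hb)
  exact h.intervalIntegrable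

lemma Gam_sub {f : ℝ → ℝ} (hf : IsDensity f) {P : Set ℝ} (hP : IsPoolingSet P) {θ : ℝ}
    (hθ : θ ∈ Icc (0:ℝ) 1) : Gam f P θ = Gam f ∅ θ + ∫ t in (0:ℝ)..θ, gdev f P t := by
  have h0 : (0:ℝ) ∈ Icc (0:ℝ) 1 := by simp
  have e : Gam f ∅ θ = ∫ t in (0:ℝ)..θ, cdfF f t := by simp [Gam, Gp]
  rw [e, ← intervalIntegral.integral_add (cdfF_ii hf h0 hθ) (gdev_ii hf hP h0 hθ)]
  simp [Gam, gdev]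

lemma int_congr_Ioo {g h : ℝ → ℝ} {a b : ℝ} (hab : a ≤ b) (H : ∀ t ∈ Ioo a b, g t = h t) :
    ∫ t in a..b, g t = ∫ t in a..b, h t := by
  rw [intervalIntegral.integral_of_le hab, intervalIntegral.integral_of_le hab,
    integral_Ioc_eq_integral_Ioo, integral_Ioc_eq_integral_Ioo]
  exact setIntegral_congr_fun measurableSet_Ioo H

lemma comp_zero {f : ℝ → ℝ} (hf : IsDensity f) {P : Set ℝ} (hP : IsPoolingSet P) {x : ℝ}
    (hx : x ∈ P) : ∫ t in (compInf P x)..(compSup P x), gdev f P t = 0 := by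
  obtain ⟨h1, h2, h3, h4, h5⟩ := comp_facts hP hx
  have hm := condMean_mem hf h1 h2 h3
  have hp := cdfF_sub hf h1 h2
  have hlt := cdfF_lt hf h1 h2 h3
  have hbp := parts hf h1 h2
  have hmdef : condMean f (compInf P x) (compSup P x) *
      (cdfF f (compSup P x) - cdfF f (compInf P x)) =
      ∫ t in (compInf P x)..(compSup P x), t * f t := by
    rw [condMean, ← hp, div_mul_cancel₀ _ (by linarith)]
  have hG : ∀ t ∈ Ioo (compInf P x) (compSup P x), Gp f P t = _ := fun t ht => Gp_comp (h4 ht)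
  set ξ := compInf P x
  set ζ := compSup P x
  set m := condMean f ξ ζ
  have hm01 : m ∈ Icc (0:ℝ) 1 := ⟨h1.1.trans hm.1.le, hm.2.le.trans h2.2⟩
  have s1 : ∫ t in ξ..m, gdev f P t = ∫ t in ξ..m, (cdfF f ξ - cdfF f t) :=
    int_congr_Ioo hm.1.le fun t ht => by
      rw [gdev, hG t ⟨ht.1, ht.2.trans hm.2⟩, if_pos ht.2]
  have s2 : ∫ t in m..ζ, gdev f P t = ∫ t in m..ζ, (cdfF f ζ - cdfF f t) :=
    int_congr_Ioo hm.2.le fun t ht => by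
      rw [gdev, hG t ⟨hm.1.trans ht.1, ht.2⟩, if_neg ht.1.le.not_gt]
  rw [← intervalIntegral.integral_add_adjacent_intervals (gdev_ii hf hP h1 hm01)
    (gdev_ii hf hP hm01 h2), s1, s2,
    intervalIntegral.integral_sub (by simp) (cdfF_ii hf h1 hm01),
    intervalIntegral.integral_sub (by simp) (cdfF_ii hf hm01 h2),
    intervalIntegral.integral_const, intervalIntegral.integral_const, smul_eq_mul, smul_eq_mul]
  have hadd := intervalIntegral.integral_add_adjacent_intervals (cdfF_ii hf h1 hm01)
    (cdfF_ii hf hm01 h2)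
  linarith

lemma zero_off {f : ℝ → ℝ} (hf : IsDensity f) {P : Set ℝ} (hP : IsPoolingSet P) {θ : ℝ}
    (hθ : θ ∈ Icc (0:ℝ) 1)
    (hn : ¬ ∃ θ' ∈ P, θ ∈ Ioo (compInf P θ') (compSup P θ')) :
    ∫ t in (0:ℝ)..θ, gdev f P t = 0 := by
  have hsub01 : Ioc 0 θ ⊆ Icc (0:ℝ) 1 := fun t ht => ⟨ht.1.le, ht.2.trans hθ.2⟩
  rw [intervalIntegral.integral_of_le hθ.1]
  have e1 : ∫ t in Ioc 0 θ, gdev f P t = ∫ t in ⋃ C : comps P, ((C : Set ℝ) ∩ Ioc 0 θ),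
      gdev f P t := by
    rw [← iUnion_inter, comps_union]
    refine setIntegral_eq_of_subset_of_forall_sdiff_eq_zero measurableSet_Ioc
      inter_subset_right fun t ht => gdev_off fun h => ht.2 ⟨h, ht.1⟩
  have := (comps_countable hP).to_subtype
  rw [e1, integral_iUnion (fun C => (comps_meas C).inter measurableSet_Ioc)]
  · refine (tsum_congr fun C => ?_).trans tsum_zero
    obtain ⟨_, ⟨x, hx, rfl⟩⟩ := C
    obtain ⟨h1, h2, h3, h4, h5⟩ := comp_facts hP hx
    simp only
    by_cases hc : θ ≤ compInf P x
    · refine setIntegral_measure_zero _ (measure_mono_null (t := {θ}) ?_ (by simp))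
      rintro t ⟨ht, ht2⟩
      exact le_antisymm ht2.2 (hc.trans (h5 ht).1)
    · have hz : compSup P x ≤ θ := by
        by_contra hh
        exact hn ⟨x, hx, not_le.1 hc, not_le.1 hh⟩
      have hae : (connectedComponentIn P x ∩ Ioc 0 θ : Set ℝ) =ᵐ[volume]
          Ioo (compInf P x) (compSup P x) := by
        refine Filter.EventuallyEq.trans (g := Icc (compInf P x) (compSup P x)) ?_ Ioo_ae_eq_Icc.symm
        refine Filter.EventuallyLE.antisymm
          (LE.le.eventuallyLE (fun t ht => h5 ht.1)) ?_
        refine Ioo_ae_eq_Icc.symm.le.trans (LE.le.eventuallyLE ?_)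
        exact fun t ht => ⟨h4 ht, h1.1.trans_lt ht.1, ht.2.le.trans hz⟩
      rw [setIntegral_congr_set hae, ← integral_Ioc_eq_integral_Ioo,
        ← intervalIntegral.integral_of_le h3.le]
      exact comp_zero hf hP hx
  · intro C D hCD
    exact ((comps_disj P) C.2 D.2 (fun h => hCD (Subtype.ext h))).mono
      inter_subset_left inter_subset_left
  · exact (gdev_int hf hP).mono_set (iUnion_subset fun C => inter_subset_right.trans hsub01)

lemma neg_on {f : ℝ → ℝ} (hf : IsDensity f) {P : Set ℝ} (hP : IsPoolingSet P) {θ x : ℝ}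
    (hx : x ∈ P) (hθx : θ ∈ Ioo (compInf P x) (compSup P x)) :
    ∫ t in (0:ℝ)..θ, gdev f P t < 0 := by
  obtain ⟨h1, h2, h3, h4, h5⟩ := comp_facts hP hx
  have h0 : (0:ℝ) ∈ Icc (0:ℝ) 1 := by simp
  have hθ : θ ∈ Icc (0:ℝ) 1 := ⟨h1.1.trans hθx.1.le, hθx.2.le.trans h2.2⟩
  have hz : ∫ t in (0:ℝ)..(compInf P x), gdev f P t = 0 := by
    refine zero_off hf hP h1 ?_
    rintro ⟨y, hy, hlt⟩
    obtain ⟨k1, k2, k3, k4, k5⟩ := comp_facts hP hy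
    obtain ⟨z, hz1, hz2⟩ := exists_between (lt_min hlt.2 h3)
    have e := (connectedComponentIn_eq (k4 ⟨hlt.1.trans hz1, hz2.trans_le (min_le_left _ _)⟩)).trans
      (connectedComponentIn_eq (h4 ⟨hz1, hz2.trans_le (min_le_right _ _)⟩)).symm
    have : compInf P y = compInf P x := by rw [compInf, e, compInf]
    exact absurd hlt.1 (by rw [this]; exact lt_irrefl _)
  have hc := comp_zero hf hP hx
  have hG : ∀ t ∈ Ioo (compInf P x) (compSup P x), Gp f P t = _ := fun t ht => Gp_comp (h4 ht)
  have hm := condMean_mem hf h1 h2 h3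
  rw [← intervalIntegral.integral_add_adjacent_intervals (gdev_ii hf hP h0 h1)
    (gdev_ii hf hP h1 hθ), hz, zero_add]
  rcases le_total θ (condMean f (compInf P x) (compSup P x)) with h | h
  · have hpos : 0 < ∫ t in (compInf P x)..θ, -gdev f P t := by
      refine intervalIntegral.intervalIntegral_pos_of_pos_on (gdev_ii hf hP h1 hθ).neg ?_ hθx.1
      intro t ht
      rw [gdev, hG t ⟨ht.1, ht.2.trans hθx.2⟩, if_pos (ht.2.trans_le h)]
      linarith [cdfF_lt hf h1 ⟨h1.1.trans ht.1.le, ht.2.le.trans hθ.2⟩ ht.1]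
    rw [intervalIntegral.integral_neg] at hpos
    linarith
  · have hpos : 0 < ∫ t in θ..(compSup P x), gdev f P t := by
      refine intervalIntegral.intervalIntegral_pos_of_pos_on (gdev_ii hf hP hθ h2) ?_ hθx.2
      intro t ht
      rw [gdev, hG t ⟨hθx.1.trans ht.1, ht.2⟩, if_neg (h.trans ht.1.le).not_gt]
      linarith [cdfF_lt hf ⟨hθ.1.trans ht.1.le, ht.2.le.trans h2.2⟩ h2 ht.2]
    rw [← intervalIntegral.integral_add_adjacent_intervals (gdev_ii hf hP h1 hθ)
      (gdev_ii hf hP hθ h2)] at hc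
    linarith

/-- For every open pooling set `P = ⋃ᵢ (ξᵢ, ζᵢ)` and every
`θ ∈ [0,1]`: `Γ_P(θ) = Γ_∅(θ)` iff `θ` lies in none of the open real intervals
`(ξᵢ, ζᵢ)`; and `Γ_P(θ) < Γ_∅(θ)` whenever `θ ∈ (ξᵢ, ζᵢ)` for some `i`. -/
theorem Gam_eq_iff_not_pooled (f : ℝ → ℝ) (hf : IsDensity f)
    (P : Set ℝ) (hP : IsPoolingSet P) (θ : ℝ) (hθ : θ ∈ Icc (0:ℝ) 1) :
    (Gam f P θ = Gam f (∅ : Set ℝ) θ ↔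
      ¬ ∃ θ' ∈ P, θ ∈ Ioo (compInf P θ') (compSup P θ')) ∧
    ((∃ θ' ∈ P, θ ∈ Ioo (compInf P θ') (compSup P θ')) →
      Gam f P θ < Gam f (∅ : Set ℝ) θ) := by
  have hneg : (∃ θ' ∈ P, θ ∈ Ioo (compInf P θ') (compSup P θ')) →
      Gam f P θ < Gam f (∅ : Set ℝ) θ := by
    rintro ⟨x, hx, hθx⟩
    rw [Gam_sub hf hP hθ]
    linarith [neg_on hf hP hx hθx]
  refine ⟨⟨fun h hex => (hneg hex).ne h, fun hn => ?_⟩, hneg⟩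
  rw [Gam_sub hf hP hθ, zero_off hf hP hθ hn, add_zero]
end
end

section
/- For every open pooling set P, the value of P under u satisfies the double integration-by-parts identity ∫_0^1 u(θ) dG_P(θ) = u(1) − u'(1)·(1 − E_F[θ]) + ∫_0^1 u''(θ) Γ_P(θ) dθ. Consequently, an open pooling set is optimal for u if and only if it maximizes ∫_0^1 u''(θ) Γ_P(θ) dθ over all open subsets of [0,1]. -/
open MeasureTheory Set
open scoped Classical

noncomputable section

/-- `u` is continuously differentiable on `[0,1]` with derivative `u'`, and `u'`
is absolutely continuous with integrable a.e. derivative `u''` (encoded via the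
fundamental theorem of calculus). -/
def C1AC (u u' u'' : ℝ → ℝ) : Prop :=
  (∀ θ ∈ Icc (0:ℝ) 1, HasDerivAt u (u' θ) θ) ∧
  ContinuousOn u' (Icc (0:ℝ) 1) ∧
  IntegrableOn u'' (Icc (0:ℝ) 1) ∧
  (∀ θ ∈ Icc (0:ℝ) 1, u' θ = u' 0 + ∫ t in (0:ℝ)..θ, u'' t)

lemma aux_inner (a b c g : ℝ) (hab : a ≤ b) :
    (∫ s in Ioc a b, if c ≤ s then g else 0) = g * (b - max a (min b c)) := by
  have h1 : (fun s => if c ≤ s then g else 0) = (Ici c).indicator (fun _ => g) := by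
    ext s; simp [indicator]
  rw [h1, setIntegral_indicator measurableSet_Ici]
  have h2 : (Ioc a b ∩ Ici c : Set ℝ) =ᵐ[volume] Ioc (max a (min b c)) b := by
    have h3 : (Ioc a b ∩ Ici c : Set ℝ) =ᵐ[volume] (Ioc a b ∩ Ioi c : Set ℝ) :=
      (ae_eq_refl _).inter (Ioi_ae_eq_Ici.symm)
    refine h3.trans (Filter.EventuallyEq.of_eq (Set.ext fun s => ?_))
    simp only [mem_inter_iff, mem_Ioc, mem_Ioi, max_lt_iff, min_lt_iff]
    constructor
    · rintro ⟨⟨h, h'⟩, h''⟩; exact ⟨⟨h, Or.inr h''⟩, h'⟩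
    · rintro ⟨⟨h, h'⟩, h''⟩
      refine ⟨⟨h, h''⟩, ?_⟩
      rcases h' with h' | h'
      · linarith
      · exact h'
  rw [setIntegral_congr_set h2, setIntegral_const, smul_eq_mul, mul_comm]
  congr 1
  simp [measureReal_def, hab]

lemma aux_fubini (g m : ℝ → ℝ) (hg : IntegrableOn g (Ioc (0:ℝ) 1))
    (hm : AEMeasurable m (volume.restrict (Ioc (0:ℝ) 1))) (a b : ℝ) (hab : a ≤ b) :
    (∫ s in Ioc a b, ∫ θ in Ioc (0:ℝ) 1, if m θ ≤ s then g θ else 0) =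
      ∫ θ in Ioc (0:ℝ) 1, g θ * (b - max a (min b (m θ))) := by
  rw [integral_integral_swap]
  · refine integral_congr_ae (Filter.Eventually.of_forall fun θ => ?_)
    exact aux_inner a b (m θ) (g θ) hab
  · have h1 : Integrable (fun z : ℝ × ℝ => g z.2)
        ((volume.restrict (Ioc a b)).prod (volume.restrict (Ioc (0:ℝ) 1))) :=
      Integrable.comp_snd hg _
    have h2 : NullMeasurableSet {z : ℝ × ℝ | m z.2 ≤ z.1}
        ((volume.restrict (Ioc a b)).prod (volume.restrict (Ioc (0:ℝ) 1))) :=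
      nullMeasurableSet_le hm.comp_snd measurable_fst.aemeasurable
    have h3 := h1.indicator₀ h2
    refine h3.congr (Filter.Eventually.of_forall fun z => ?_)
    simp [indicator, Function.uncurry]

lemma aux_taylor (u u' u'' : ℝ → ℝ) (hu : C1AC u u' u'') (x : ℝ) (hx : x ∈ Icc (0:ℝ) 1) :
    u x = u 1 - u' 1 * (1 - x) + ∫ t in Ioc (0:ℝ) 1, u'' t * max (t - x) 0 := by
  obtain ⟨h1, h2, h3, h4⟩ := hu
  have h3' : IntegrableOn u'' (Ioc (0:ℝ) 1) := h3.mono_set Ioc_subset_Icc_self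
  have hsub : Icc x 1 ⊆ Icc (0:ℝ) 1 := Icc_subset_Icc_left hx.1
  have hftc : ∫ s in x..1, u' s = u 1 - u x := by
    apply intervalIntegral.integral_eq_sub_of_hasDerivAt
    · intro s hs
      rw [uIcc_of_le hx.2] at hs
      exact h1 s (hsub hs)
    · apply ContinuousOn.intervalIntegrable
      rw [uIcc_of_le hx.2]
      exact h2.mono hsub
  have key : ∀ s ∈ Icc (0:ℝ) 1, u' s = u' 0 + ∫ t in Ioc (0:ℝ) 1, if t ≤ s then u'' t else 0 := by
    intro s hs
    rw [h4 s hs, intervalIntegral.integral_of_le hs.1]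
    congr 1
    have : (fun t => if t ≤ s then u'' t else 0) = (Iic s).indicator u'' := by
      ext t; simp [indicator]
    rw [this, setIntegral_indicator measurableSet_Iic]
    congr 2
    ext t
    simp only [mem_Ioc, mem_inter_iff, mem_Iic]
    constructor
    · rintro ⟨h, h'⟩; exact ⟨⟨h, h'.trans hs.2⟩, h'⟩
    · rintro ⟨⟨h, _⟩, h'⟩; exact ⟨h, h'⟩
  have hi : ∫ s in x..1, (u' s - u' 0) =
      ∫ t in Ioc (0:ℝ) 1, u'' t * (1 - max x (min 1 t)) := by
    rw [← aux_fubini u'' (fun t => t) h3' aemeasurable_id x 1 hx.2,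
      intervalIntegral.integral_of_le hx.2]
    refine setIntegral_congr_fun measurableSet_Ioc fun s hs => ?_
    have := key s (hsub (Ioc_subset_Icc_self hs))
    try simp only
    linarith
  rw [intervalIntegral.integral_sub, hftc, intervalIntegral.integral_const] at hi
  rotate_left
  · apply ContinuousOn.intervalIntegrable
    rw [uIcc_of_le hx.2]
    exact h2.mono hsub
  · exact intervalIntegrable_const
  have hu1 : u' 1 = u' 0 + ∫ t in Ioc (0:ℝ) 1, u'' t := by
    rw [h4 1 (by simp), intervalIntegral.integral_of_le zero_le_one]
  have hI : ∀ φ : ℝ → ℝ, Continuous φ → IntegrableOn (fun t => u'' t * φ t) (Ioc (0:ℝ) 1) := by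
    intro φ hφ
    have := h3.mul_continuousOn hφ.continuousOn isCompact_Icc
    exact this.mono_set Ioc_subset_Icc_self
  have hsum : (∫ t in Ioc (0:ℝ) 1, u'' t * (1 - max x (min 1 t))) +
      (∫ t in Ioc (0:ℝ) 1, u'' t * max (t - x) 0) = (∫ t in Ioc (0:ℝ) 1, u'' t) * (1 - x) := by
    rw [← integral_add (hI _ (by fun_prop)) (hI _ (by fun_prop)), ← integral_mul_const]
    refine setIntegral_congr_fun measurableSet_Ioc fun t ht => ?_
    try simp only
    rw [min_eq_right ht.2, ← mul_add]
    congr 1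
    rcases le_total x t with h | h
    · rw [max_eq_right h, max_eq_left (by linarith)]; ring
    · rw [max_eq_left h, max_eq_right (by linarith)]; ring
  rw [hu1]
  simp only [smul_eq_mul] at hi
  linarith

section comp
variable {P : Set ℝ}

lemma aux_comp_sub (hP : IsPoolingSet P) (θ : ℝ) : connectedComponentIn P θ ⊆ Icc (0:ℝ) 1 := by
  obtain ⟨U, hU, rfl⟩ := hP
  exact (connectedComponentIn_subset _ _).trans inter_subset_right

lemma aux_comp_bdd (hP : IsPoolingSet P) (θ : ℝ) :
    BddBelow (connectedComponentIn P θ) ∧ BddAbove (connectedComponentIn P θ) :=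
  ⟨bddBelow_Icc.mono (aux_comp_sub hP θ), bddAbove_Icc.mono (aux_comp_sub hP θ)⟩

lemma aux_comp_interior (hP : IsPoolingSet P) {θ : ℝ} (hθ : θ ∈ P) :
    (interior (connectedComponentIn P θ)).Nonempty := by
  have hP' := hP
  obtain ⟨U, hU, rfl⟩ := hP
  obtain ⟨ε, hε, hb⟩ := Metric.isOpen_iff.1 hU θ hθ.1
  have hc : Metric.ball θ ε ∩ Icc (0:ℝ) 1 ⊆ connectedComponentIn (U ∩ Icc (0:ℝ) 1) θ := by
    apply IsPreconnected.subset_connectedComponentIn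
    · exact ((convex_ball θ ε).inter (convex_Icc 0 1)).isPreconnected
    · exact ⟨Metric.mem_ball_self hε, hθ.2⟩
    · exact inter_subset_inter_left _ hb
  have hcl : θ ∈ closure (Ioo (0:ℝ) 1) := by
    rw [closure_Ioo (by norm_num)]; exact hθ.2
  obtain ⟨y, hy⟩ := mem_closure_iff.1 hcl _ Metric.isOpen_ball (Metric.mem_ball_self hε)
  refine ⟨y, ?_⟩
  apply interior_maximal _ (Metric.isOpen_ball.inter isOpen_Ioo) hy
  exact (inter_subset_inter_right _ Ioo_subset_Icc_self).trans hc

lemma aux_comp_Icc (hP : IsPoolingSet P) (θ : ℝ) :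
    connectedComponentIn P θ ⊆ Icc (compInf P θ) (compSup P θ) := fun _ hx =>
  ⟨csInf_le (aux_comp_bdd hP θ).1 hx, le_csSup (aux_comp_bdd hP θ).2 hx⟩

lemma aux_comp_Ioo (hP : IsPoolingSet P) (θ : ℝ) :
    Ioo (compInf P θ) (compSup P θ) ⊆ connectedComponentIn P θ := by
  by_cases hθ : θ ∈ P
  · exact (isConnected_connectedComponentIn_iff.2 hθ).Ioo_csInf_csSup_subset
      (aux_comp_bdd hP θ).1 (aux_comp_bdd hP θ).2
  · simp [compInf, compSup, connectedComponentIn_eq_empty hθ]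

lemma aux_comp_lt (hP : IsPoolingSet P) {θ : ℝ} (hθ : θ ∈ P) : compInf P θ < compSup P θ := by
  by_contra h
  push Not at h
  have h1 : connectedComponentIn P θ ⊆ {compInf P θ} := fun x hx => by
    have := aux_comp_Icc hP θ hx
    exact le_antisymm (this.2.trans h) this.1
  have h2 := (aux_comp_interior hP hθ).mono (interior_mono h1)
  simp at h2

lemma aux_comp_bounds (hP : IsPoolingSet P) {θ : ℝ} (hθ : θ ∈ P) :
    0 ≤ compInf P θ ∧ compSup P θ ≤ 1 := by
  have hne : (connectedComponentIn P θ).Nonempty := ⟨θ, mem_connectedComponentIn hθ⟩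
  exact ⟨le_csInf hne fun x hx => (aux_comp_sub hP θ hx).1,
    csSup_le hne fun x hx => (aux_comp_sub hP θ hx).2⟩

lemma aux_comp_ae (hP : IsPoolingSet P) (θ : ℝ) :
    connectedComponentIn P θ =ᵐ[volume] Ioc (compInf P θ) (compSup P θ) := by
  apply Filter.EventuallyLE.antisymm
  · exact ((aux_comp_Icc hP θ).eventuallyLE).trans Ioc_ae_eq_Icc.symm.le
  · exact Ioo_ae_eq_Ioc.symm.le.trans (aux_comp_Ioo hP θ).eventuallyLE

lemma aux_f_pos (f : ℝ → ℝ) (hf : IsDensity f) {a b : ℝ} (ha : 0 ≤ a) (hb : b ≤ 1) (hab : a < b) :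
    a < condMean f a b ∧ condMean f a b < b ∧
      condMean f a b * (∫ t in a..b, f t) = ∫ t in a..b, t * f t := by
  have hsub : Icc a b ⊆ Icc (0:ℝ) 1 := Icc_subset_Icc ha hb
  have hint : IntegrableOn f (Icc a b) := hf.2.1.mono_set hsub
  have hI : ∀ φ : ℝ → ℝ, Continuous φ → IntervalIntegrable (fun t => φ t * f t) volume a b := by
    intro φ hφ
    have := hint.continuousOn_mul hφ.continuousOn isCompact_Icc
    rw [intervalIntegrable_iff_integrableOn_Icc_of_le hab.le]
    exact this
  have hI0 : IntervalIntegrable f volume a b := by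
    rwa [intervalIntegrable_iff_integrableOn_Icc_of_le hab.le]
  have hfp : ∀ t ∈ Ioo a b, 0 < f t := fun t ht => hf.1 t (hsub (Ioo_subset_Icc_self ht))
  have h0 : 0 < ∫ t in a..b, f t :=
    intervalIntegral.intervalIntegral_pos_of_pos_on hI0 hfp hab
  have h1 : 0 < ∫ t in a..b, (t - a) * f t :=
    intervalIntegral.intervalIntegral_pos_of_pos_on (hI (fun t => t - a) (by fun_prop))
      (fun t ht => mul_pos (by linarith [ht.1]) (hfp t ht)) hab
  have h2 : 0 < ∫ t in a..b, (b - t) * f t :=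
    intervalIntegral.intervalIntegral_pos_of_pos_on (hI (fun t => b - t) (by fun_prop))
      (fun t ht => mul_pos (by linarith [ht.2]) (hfp t ht)) hab
  simp only [sub_mul] at h1 h2
  rw [intervalIntegral.integral_sub (hI (fun t => t) continuous_id) (hI0.const_mul a),
    intervalIntegral.integral_const_mul] at h1
  rw [intervalIntegral.integral_sub (hI0.const_mul b) (hI (fun t => t) continuous_id),
    intervalIntegral.integral_const_mul] at h2
  refine ⟨?_, ?_, ?_⟩
  · rw [condMean, lt_div_iff₀ h0]; linarith
  · rw [condMean, div_lt_iff₀ h0]; linarith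
  · rw [condMean, div_mul_cancel₀ _ h0.ne']

lemma aux_cm (f : ℝ → ℝ) (hf : IsDensity f) (hP : IsPoolingSet P) {θ : ℝ} (hθ : θ ∈ P) :
    compInf P θ < poolMean f P θ ∧ poolMean f P θ < compSup P θ := by
  rw [poolMean, if_pos hθ]
  have := aux_f_pos f hf (aux_comp_bounds hP hθ).1 (aux_comp_bounds hP hθ).2 (aux_comp_lt hP hθ)
  exact ⟨this.1, this.2.1⟩

lemma aux_mem (f : ℝ → ℝ) (hf : IsDensity f) (hP : IsPoolingSet P) {θ : ℝ}
    (hθ : θ ∈ Icc (0:ℝ) 1) : poolMean f P θ ∈ Icc (0:ℝ) 1 := by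
  by_cases h : θ ∈ P
  · have h1 := aux_cm f hf hP h
    have h2 := aux_comp_bounds hP h
    exact ⟨by linarith, by linarith⟩
  · rwa [poolMean, if_neg h]

lemma aux_same (f : ℝ → ℝ) {θ s : ℝ} (h : θ ∈ connectedComponentIn P s) :
    poolMean f P θ = poolMean f P s := by
  have hs : s ∈ P := by
    by_contra hs
    rw [connectedComponentIn_eq_empty hs] at h
    exact h
  have hθ : θ ∈ P := connectedComponentIn_subset _ _ h
  rw [poolMean, poolMean, if_pos hθ, if_pos hs, compInf, compSup, compInf, compSup,
    connectedComponentIn_eq h]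

lemma aux_left (f : ℝ → ℝ) (hf : IsDensity f) (hP : IsPoolingSet P) {θ s : ℝ}
    (h : θ < s) (hc : θ ∉ connectedComponentIn P s) : poolMean f P θ < s := by
  by_cases hθ : θ ∈ P
  · refine (aux_cm f hf hP hθ).2.trans_le ?_
    refine csSup_le ⟨θ, mem_connectedComponentIn hθ⟩ fun x hx => ?_
    by_contra hxs
    push Not at hxs
    have : s ∈ connectedComponentIn P θ :=
      isPreconnected_connectedComponentIn.ordConnected.out (mem_connectedComponentIn hθ) hx
        ⟨h.le, hxs.le⟩
    apply hc
    rw [← connectedComponentIn_eq this]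
    exact mem_connectedComponentIn hθ
  · rwa [poolMean, if_neg hθ]

lemma aux_right (f : ℝ → ℝ) (hf : IsDensity f) (hP : IsPoolingSet P) {θ s : ℝ}
    (h : s < θ) (hc : θ ∉ connectedComponentIn P s) : s < poolMean f P θ := by
  by_cases hθ : θ ∈ P
  · refine lt_of_le_of_lt ?_ (aux_cm f hf hP hθ).1
    refine le_csInf ⟨θ, mem_connectedComponentIn hθ⟩ fun x hx => ?_
    by_contra hxs
    push Not at hxs
    have : s ∈ connectedComponentIn P θ :=
      isPreconnected_connectedComponentIn.ordConnected.out hx (mem_connectedComponentIn hθ)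
        ⟨hxs.le, h.le⟩
    apply hc
    rw [← connectedComponentIn_eq this]
    exact mem_connectedComponentIn hθ
  · rwa [poolMean, if_neg hθ]

lemma aux_cut (f : ℝ → ℝ) (hf : IsDensity f) (hP : IsPoolingSet P) {s : ℝ}
    (hs : s ∈ Icc (0:ℝ) 1) : ∃ c ∈ Icc (0:ℝ) 1, Gp f P s = cdfF f c ∧
      ∀ θ, (θ < c → poolMean f P θ ≤ s) ∧ (c < θ → s < poolMean f P θ) := by
  by_cases hsP : s ∈ P
  · have hb := aux_comp_bounds hP hsP
    have hlt := aux_comp_lt hP hsP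
    have hsm := aux_comp_Icc hP s (mem_connectedComponentIn hsP)
    have hpm : poolMean f P s = condMean f (compInf P s) (compSup P s) := by
      rw [poolMean, if_pos hsP]
    by_cases hlt' : s < condMean f (compInf P s) (compSup P s)
    · refine ⟨compInf P s, ⟨hb.1, by linarith⟩, ?_, fun θ => ⟨fun h => ?_, fun h => ?_⟩⟩
      · rw [Gp, if_pos hsP, if_pos hlt']
      · refine (aux_left f hf hP (h.trans_le hsm.1) fun hc => ?_).le
        exact absurd (aux_comp_Icc hP s hc).1 (not_le.2 h)
      · by_cases hc : θ ∈ connectedComponentIn P s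
        · rw [aux_same f hc, hpm]; exact hlt'
        · apply aux_right f hf hP _ hc
          by_contra hθ
          push Not at hθ
          rcases hθ.eq_or_lt with rfl | hθ
          · exact hc (mem_connectedComponentIn hsP)
          · exact hc (aux_comp_Ioo hP s ⟨h, hθ.trans_le hsm.2⟩)
    · refine ⟨compSup P s, ⟨by linarith, hb.2⟩, ?_, fun θ => ⟨fun h => ?_, fun h => ?_⟩⟩
      · rw [Gp, if_pos hsP, if_neg hlt']
      · by_cases hc : θ ∈ connectedComponentIn P s
        · rw [aux_same f hc, hpm]; exact not_lt.1 hlt'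
        · refine (aux_left f hf hP ?_ hc).le
          by_contra hθ
          push Not at hθ
          rcases hθ.eq_or_lt with rfl | hθ
          · exact hc (mem_connectedComponentIn hsP)
          · exact hc (aux_comp_Ioo hP s ⟨hsm.1.trans_lt hθ, h⟩)
      · refine aux_right f hf hP (hsm.2.trans_lt h) fun hc => ?_
        exact absurd (aux_comp_Icc hP s hc).2 (not_le.2 h)
  · have he := connectedComponentIn_eq_empty hsP
    refine ⟨s, hs, ?_, fun θ => ⟨fun h => ?_, fun h => ?_⟩⟩
    · rw [Gp, if_neg hsP]
    · exact (aux_left f hf hP h (by simp [he])).le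
    · exact aux_right f hf hP h (by simp [he])

lemma aux_mono (f : ℝ → ℝ) (hf : IsDensity f) (hP : IsPoolingSet P) :
    MonotoneOn (poolMean f P) (Icc (0:ℝ) 1) := by
  intro θ hθ θ' hθ' h
  by_contra hlt
  push Not at hlt
  obtain ⟨c, -, -, hc⟩ := aux_cut f hf hP (aux_mem f hf hP hθ')
  have h1 : θ' ≤ c := by
    by_contra h'
    exact absurd ((hc θ').2 (not_le.1 h')) (lt_irrefl _)
  have h2 : c ≤ θ := by
    by_contra h'
    exact absurd ((hc θ).1 (not_le.1 h')) (not_le.2 hlt)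
  have : θ = θ' := le_antisymm h (h1.trans h2)
  subst this
  exact lt_irrefl _ hlt

lemma aux_meas (f : ℝ → ℝ) (hf : IsDensity f) (hP : IsPoolingSet P) :
    AEMeasurable (poolMean f P) (volume.restrict (Ioc (0:ℝ) 1)) :=
  aemeasurable_restrict_of_monotoneOn measurableSet_Ioc
    ((aux_mono f hf hP).mono Ioc_subset_Icc_self)

lemma aux_Gp (f : ℝ → ℝ) (hf : IsDensity f) (hP : IsPoolingSet P) {s : ℝ}
    (hs : s ∈ Icc (0:ℝ) 1) :
    Gp f P s = ∫ θ in Ioc (0:ℝ) 1, if poolMean f P θ ≤ s then f θ else 0 := by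
  obtain ⟨c, hc01, hG, hc⟩ := aux_cut f hf hP hs
  rw [hG, cdfF, intervalIntegral.integral_of_le hc01.1]
  have h1 : Ioc (0:ℝ) c = Ioc 0 1 ∩ Iic c := by
    ext t
    simp only [mem_Ioc, mem_inter_iff, mem_Iic]
    constructor
    · rintro ⟨h, h'⟩; exact ⟨⟨h, h'.trans hc01.2⟩, h'⟩
    · rintro ⟨⟨h, _⟩, h'⟩; exact ⟨h, h'⟩
  rw [h1, ← setIntegral_indicator measurableSet_Iic]
  apply integral_congr_ae
  apply ae_restrict_of_ae
  have hne : ∀ᵐ θ : ℝ, θ ≠ c := by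
    simp [ae_iff]
  filter_upwards [hne] with θ hθ
  rcases lt_or_gt_of_ne hθ with h | h
  · rw [if_pos ((hc θ).1 h), indicator_of_mem (mem_Iic.2 h.le)]
  · rw [if_neg (not_le.2 ((hc θ).2 h)), indicator_of_notMem (by simpa using h)]

lemma aux_Gam (f : ℝ → ℝ) (hf : IsDensity f) (hP : IsPoolingSet P) {t : ℝ}
    (ht : t ∈ Icc (0:ℝ) 1) :
    Gam f P t = ∫ θ in Ioc (0:ℝ) 1, f θ * max (t - poolMean f P θ) 0 := by
  rw [Gam, intervalIntegral.integral_of_le ht.1]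
  have h1 : ∫ s in Ioc 0 t, Gp f P s = ∫ s in Ioc 0 t, ∫ θ in Ioc (0:ℝ) 1,
      if poolMean f P θ ≤ s then f θ else 0 :=
    setIntegral_congr_fun measurableSet_Ioc fun s hs =>
      aux_Gp f hf hP ⟨hs.1.le, hs.2.trans ht.2⟩
  rw [h1, aux_fubini f (poolMean f P) (hf.2.1.mono_set Ioc_subset_Icc_self)
    (aux_meas f hf hP) 0 t ht.1]
  refine setIntegral_congr_fun measurableSet_Ioc fun θ hθ => ?_
  have hm := aux_mem f hf hP (Ioc_subset_Icc_self hθ)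
  try simp only
  congr 1
  rw [max_eq_right (le_min ht.1 hm.1)]
  rcases le_total t (poolMean f P θ) with h | h
  · rw [min_eq_left h, max_eq_right (by linarith)]; ring
  · rw [min_eq_right h, max_eq_left (by linarith)]

lemma aux_int_mf (f : ℝ → ℝ) (hf : IsDensity f) (hP : IsPoolingSet P) :
    IntegrableOn (fun θ => poolMean f P θ * f θ) (Icc (0:ℝ) 1) := by
  have hm : AEStronglyMeasurable (poolMean f P) (volume.restrict (Icc (0:ℝ) 1)) :=
    (aemeasurable_restrict_of_monotoneOn measurableSet_Icc
      (aux_mono f hf hP)).aestronglyMeasurable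
  refine Integrable.bdd_mul (c := 1) hf.2.1 hm ?_
  refine (ae_restrict_iff' measurableSet_Icc).2 (Filter.Eventually.of_forall fun θ hθ => ?_)
  have := aux_mem f hf hP hθ
  rw [Real.norm_eq_abs, abs_le]
  exact ⟨by linarith [this.1], this.2⟩

lemma aux_mean (f : ℝ → ℝ) (hf : IsDensity f) (hP : IsPoolingSet P) :
    ∫ θ in Ioc (0:ℝ) 1, poolMean f P θ * f θ = ∫ θ in Ioc (0:ℝ) 1, θ * f θ := by
  have hi1 := aux_int_mf f hf hP
  have hi2 : IntegrableOn (fun θ => θ * f θ) (Icc (0:ℝ) 1) :=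
    hf.2.1.continuousOn_mul continuousOn_id isCompact_Icc
  have hP01 : P ⊆ Icc (0:ℝ) 1 := by
    obtain ⟨U, _, rfl⟩ := hP; exact inter_subset_right
  have hPm : MeasurableSet P := by
    obtain ⟨U, hU, rfl⟩ := hP; exact hU.measurableSet.inter measurableSet_Icc
  rw [← integral_Icc_eq_integral_Ioc, ← integral_Icc_eq_integral_Ioc]
  have hdiff : ∫ θ in Icc (0:ℝ) 1, (poolMean f P θ * f θ - θ * f θ) = 0 := by
    have hsplit : ∫ θ in Icc (0:ℝ) 1, (poolMean f P θ * f θ - θ * f θ) =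
        ∫ θ in P, (poolMean f P θ * f θ - θ * f θ) := by
      refine setIntegral_eq_of_subset_of_forall_sdiff_eq_zero measurableSet_Icc hP01 ?_
      rintro θ ⟨_, h⟩
      simp [poolMean, h]
    rw [hsplit]
    have hcount : (connectedComponentIn P '' P).Countable := by
      refine Set.PairwiseDisjoint.countable_of_nonempty_interior (s := id) ?_ ?_
      · rintro _ ⟨x, hx, rfl⟩ _ ⟨y, hy, rfl⟩ hne
        rw [Function.onFun, id, id, Set.disjoint_left]
        intro z hz hz'
        exact hne ((connectedComponentIn_eq hz).trans (connectedComponentIn_eq hz').symm)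
      · rintro _ ⟨x, hx, rfl⟩
        exact aux_comp_interior hP hx
    have hU : P = ⋃ C ∈ connectedComponentIn P '' P, C := by
      ext x
      simp only [mem_iUnion, exists_prop]
      constructor
      · intro hx; exact ⟨_, ⟨x, hx, rfl⟩, mem_connectedComponentIn hx⟩
      · rintro ⟨_, ⟨y, hy, rfl⟩, hx⟩; exact connectedComponentIn_subset _ _ hx
    have hsum : HasSum (fun C : (connectedComponentIn P '' P) =>
        ∫ θ in (C : Set ℝ), (poolMean f P θ * f θ - θ * f θ))
        (∫ θ in ⋃ C : (connectedComponentIn P '' P), (C : Set ℝ),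
          (poolMean f P θ * f θ - θ * f θ)) := by
      have := hcount.to_subtype
      apply hasSum_integral_iUnion
      · rintro ⟨_, ⟨x, hx, rfl⟩⟩
        exact isPreconnected_connectedComponentIn.ordConnected.measurableSet
      · rintro ⟨_, ⟨x, hx, rfl⟩⟩ ⟨_, ⟨y, hy, rfl⟩⟩ hne
        rw [Function.onFun, Set.disjoint_left]
        intro z hz hz'
        exact hne (Subtype.ext
          ((connectedComponentIn_eq hz).trans (connectedComponentIn_eq hz').symm))
      · refine (hi1.sub hi2).mono_set ?_
        rw [← biUnion_eq_iUnion (connectedComponentIn P '' P) (fun C _ => C), ← hU]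
        exact hP01
    rw [← biUnion_eq_iUnion (connectedComponentIn P '' P) (fun C _ => C), ← hU] at hsum
    refine hsum.unique ?_
    convert hasSum_zero with C
    obtain ⟨_, ⟨x, hx, rfl⟩⟩ := C
    have hsub := aux_comp_sub hP x
    have hb := aux_comp_bounds hP hx
    have hlt := aux_comp_lt hP hx
    try simp only
    rw [integral_sub (hi1.mono_set hsub) (hi2.mono_set hsub)]
    have h1 : ∫ θ in connectedComponentIn P x, poolMean f P θ * f θ =
        ∫ θ in connectedComponentIn P x, poolMean f P x * f θ := by
      refine setIntegral_congr_fun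
        isPreconnected_connectedComponentIn.ordConnected.measurableSet fun θ hθ => ?_
      try simp only
      rw [aux_same f hθ]
    rw [h1, integral_const_mul, setIntegral_congr_set (aux_comp_ae hP x),
      setIntegral_congr_set (aux_comp_ae hP x), ← intervalIntegral.integral_of_le hlt.le,
      ← intervalIntegral.integral_of_le hlt.le, poolMean, if_pos hx,
      (aux_f_pos f hf hb.1 hb.2 hlt).2.2, sub_self]
  rw [integral_sub hi1 hi2] at hdiff
  linarith

lemma aux_value (f : ℝ → ℝ) (hf : IsDensity f) (u u' u'' : ℝ → ℝ) (hu : C1AC u u' u'')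
    (hP : IsPoolingSet P) :
    poolValue f u P =
        u 1 - u' 1 * (1 - ∫ t in (0:ℝ)..1, t * f t) +
          ∫ θ in (0:ℝ)..1, u'' θ * Gam f P θ := by
  have hfi : IntegrableOn f (Ioc (0:ℝ) 1) := hf.2.1.mono_set Ioc_subset_Icc_self
  have hui : IntegrableOn u'' (Ioc (0:ℝ) 1) := hu.2.2.1.mono_set Ioc_subset_Icc_self
  have hmf : IntegrableOn (fun θ => poolMean f P θ * f θ) (Ioc (0:ℝ) 1) :=
    (aux_int_mf f hf hP).mono_set Ioc_subset_Icc_self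
  have hf1 : ∫ θ in Ioc (0:ℝ) 1, f θ = 1 := by
    rw [← intervalIntegral.integral_of_le zero_le_one]; exact hf.2.2
  rw [poolValue, intervalIntegral.integral_of_le zero_le_one,
    intervalIntegral.integral_of_le zero_le_one, intervalIntegral.integral_of_le zero_le_one]
  have hjoint : Integrable (fun z : ℝ × ℝ => f z.1 * (u'' z.2 * max (z.2 - poolMean f P z.1) 0))
      ((volume.restrict (Ioc (0:ℝ) 1)).prod (volume.restrict (Ioc (0:ℝ) 1))) := by
    have h1 := Integrable.mul_prod hfi hui
    have hmm : AEMeasurable (fun z : ℝ × ℝ => max (z.2 - poolMean f P z.1) 0)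
        ((volume.restrict (Ioc (0:ℝ) 1)).prod (volume.restrict (Ioc (0:ℝ) 1))) :=
      (measurable_snd.aemeasurable.sub (aux_meas f hf hP).comp_fst).max aemeasurable_const
    have h2 := Integrable.mul_bdd (c := 1) h1 hmm.aestronglyMeasurable ?_
    · refine h2.congr (Filter.Eventually.of_forall fun z => ?_)
      try simp only
      ring
    · rw [Measure.prod_restrict]
      refine (ae_restrict_iff' (measurableSet_Ioc.prod measurableSet_Ioc)).2
        (Filter.Eventually.of_forall fun z hz => ?_)
      have hm := aux_mem f hf hP (Ioc_subset_Icc_self hz.1)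
      rw [Real.norm_eq_abs, abs_of_nonneg (le_max_right _ _)]
      exact max_le (by linarith [hz.2.2, hm.1]) zero_le_one
  have hE : ∫ θ in Ioc (0:ℝ) 1, u (poolMean f P θ) * f θ =
      ∫ θ in Ioc (0:ℝ) 1, ((u 1 - u' 1) * f θ + u' 1 * (poolMean f P θ * f θ) +
        ∫ t in Ioc (0:ℝ) 1, f θ * (u'' t * max (t - poolMean f P θ) 0)) := by
    refine setIntegral_congr_fun measurableSet_Ioc fun θ hθ => ?_
    try simp only
    rw [integral_const_mul,
      aux_taylor u u' u'' hu _ (aux_mem f hf hP (Ioc_subset_Icc_self hθ))]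
    ring
  have hJ := hjoint.integral_prod_left
  simp only at hJ
  have hA : Integrable (fun θ => (u 1 - u' 1) * f θ + u' 1 * (poolMean f P θ * f θ))
      (volume.restrict (Ioc (0:ℝ) 1)) := (hfi.const_mul _).add (hmf.const_mul _)
  rw [hE, integral_add hA hJ,
    integral_add (hfi.const_mul _) (hmf.const_mul _), integral_const_mul, integral_const_mul,
    hf1, aux_mean f hf hP, integral_integral_swap hjoint]
  have hG : ∫ t in Ioc (0:ℝ) 1, u'' t * Gam f P t =
      ∫ t in Ioc (0:ℝ) 1, ∫ θ in Ioc (0:ℝ) 1, f θ * (u'' t * max (t - poolMean f P θ) 0) := by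
    refine setIntegral_congr_fun measurableSet_Ioc fun t ht => ?_
    try simp only
    rw [aux_Gam f hf hP (Ioc_subset_Icc_self ht), ← integral_const_mul]
    refine integral_congr_ae (Filter.Eventually.of_forall fun θ => ?_)
    try simp only
    ring
  rw [hG]
  ring

end comp

/-- the double integration-by-parts identity
`∫_0^1 u dG_P = u(1) − u'(1)(1 − E_F[θ]) + ∫_0^1 u''(θ) Γ_P(θ) dθ`, and hence a
pooling set is optimal iff it maximizes `∫_0^1 u''(θ) Γ_P(θ) dθ` over all open
subsets of `[0,1]`. -/
theorem value_by_parts_and_opt (f : ℝ → ℝ) (hf : IsDensity f)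
    (u u' u'' : ℝ → ℝ) (hu : C1AC u u' u'') :
    (∀ P : Set ℝ, IsPoolingSet P →
      poolValue f u P =
        u 1 - u' 1 * (1 - ∫ t in (0:ℝ)..1, t * f t) +
          ∫ θ in (0:ℝ)..1, u'' θ * Gam f P θ) ∧
    (∀ P : Set ℝ, IsPoolingSet P →
      (IsOptimal f u P ↔ ∀ Q : Set ℝ, IsPoolingSet Q →
        (∫ θ in (0:ℝ)..1, u'' θ * Gam f Q θ) ≤
          ∫ θ in (0:ℝ)..1, u'' θ * Gam f P θ)) := by
  refine ⟨fun P hP => aux_value f hf u u' u'' hu hP, fun P hP => ?_⟩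
  constructor
  · rintro ⟨_, h⟩ Q hQ
    have := h Q hQ
    rw [aux_value f hf u u' u'' hu hP, aux_value f hf u u' u'' hu hQ] at this
    linarith
  · intro h
    refine ⟨hP, fun Q hQ => ?_⟩
    have := h Q hQ
    rw [aux_value f hf u u' u'' hu hP, aux_value f hf u u' u'' hu hQ]
    linarith
end
end

section
/- The empty pooling set (full separation) is optimal for u — that is, ∫_0^1 u(θ) dG_P(θ) ≤ ∫_0^1 u(θ) dF(θ) for every open pooling set P — if and only if u''(θ) ≥ 0 for almost all θ ∈ [0,1]. -/
open MeasureTheory Set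
open scoped Classical

noncomputable section

lemma aux_tangent {u u' : ℝ → ℝ} {a b : ℝ}
    (hd : ∀ x ∈ Icc a b, HasDerivAt u (u' x) x) (hm : MonotoneOn u' (Icc a b))
    {m θ : ℝ} (hmm : m ∈ Icc a b) (hθ : θ ∈ Icc a b) :
    u m + u' m * (θ - m) ≤ u θ := by
  rcases lt_trichotomy m θ with h | h | h
  · have hsub : Icc m θ ⊆ Icc a b := Icc_subset_Icc hmm.1 hθ.2
    obtain ⟨c, hc, hce⟩ := exists_hasDerivAt_eq_slope u u' h
      (fun x hx => (hd x (hsub hx)).continuousAt.continuousWithinAt)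
      (fun x hx => hd x (hsub (Ioo_subset_Icc_self hx)))
    have h1 := hm hmm (hsub (Ioo_subset_Icc_self hc)) hc.1.le
    have h2 : u θ - u m = u' c * (θ - m) := by
      rw [hce, div_mul_cancel₀]; exact (sub_pos.2 h).ne'
    nlinarith [mul_le_mul_of_nonneg_right h1 (sub_pos.2 h).le]
  · subst h; simp
  · have hsub : Icc θ m ⊆ Icc a b := Icc_subset_Icc hθ.1 hmm.2
    obtain ⟨c, hc, hce⟩ := exists_hasDerivAt_eq_slope u u' h
      (fun x hx => (hd x (hsub hx)).continuousAt.continuousWithinAt)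
      (fun x hx => hd x (hsub (Ioo_subset_Icc_self hx)))
    have h1 := hm (hsub (Ioo_subset_Icc_self hc)) hmm hc.2.le
    have h2 : u m - u θ = u' c * (m - θ) := by
      rw [hce, div_mul_cancel₀]; exact (sub_pos.2 h).ne'
    nlinarith [mul_le_mul_of_nonneg_right h1 (sub_pos.2 h).le]

lemma aux_tangent_strict {u u' : ℝ → ℝ} {a b : ℝ}
    (hd : ∀ x ∈ Icc a b, HasDerivAt u (u' x) x) (hm : StrictAntiOn u' (Icc a b))
    {m θ : ℝ} (hmm : m ∈ Icc a b) (hθ : θ ∈ Icc a b) (hne : θ ≠ m) :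
    u θ < u m + u' m * (θ - m) := by
  rcases lt_trichotomy m θ with h | h | h
  · have hsub : Icc m θ ⊆ Icc a b := Icc_subset_Icc hmm.1 hθ.2
    obtain ⟨c, hc, hce⟩ := exists_hasDerivAt_eq_slope u u' h
      (fun x hx => (hd x (hsub hx)).continuousAt.continuousWithinAt)
      (fun x hx => hd x (hsub (Ioo_subset_Icc_self hx)))
    have h1 := hm hmm (hsub (Ioo_subset_Icc_self hc)) hc.1
    have h2 : u θ - u m = u' c * (θ - m) := by
      rw [hce, div_mul_cancel₀]; exact (sub_pos.2 h).ne'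
    nlinarith [mul_lt_mul_of_pos_right h1 (sub_pos.2 h)]
  · exact absurd h.symm hne
  · have hsub : Icc θ m ⊆ Icc a b := Icc_subset_Icc hθ.1 hmm.2
    obtain ⟨c, hc, hce⟩ := exists_hasDerivAt_eq_slope u u' h
      (fun x hx => (hd x (hsub hx)).continuousAt.continuousWithinAt)
      (fun x hx => hd x (hsub (Ioo_subset_Icc_self hx)))
    have h1 := hm (hsub (Ioo_subset_Icc_self hc)) hmm hc.2
    have h2 : u m - u θ = u' c * (m - θ) := by
      rw [hce, div_mul_cancel₀]; exact (sub_pos.2 h).ne'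
    nlinarith [mul_lt_mul_of_pos_right h1 (sub_pos.2 h)]

lemma aux_ii {h : ℝ → ℝ} (hh : IntegrableOn h (Icc (0:ℝ) 1)) {a b : ℝ}
    (ha : 0 ≤ a) (hab : a ≤ b) (hb : b ≤ 1) : IntervalIntegrable h volume a b := by
  rw [intervalIntegrable_iff_integrableOn_Icc_of_le hab]
  exact hh.mono_set (Icc_subset_Icc ha hb)

lemma aux_mul {f h : ℝ → ℝ} (hf : IsDensity f) (hh : ContinuousOn h (Icc (0:ℝ) 1)) :
    IntegrableOn (fun t => h t * f t) (Icc (0:ℝ) 1) :=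
  IntegrableOn.continuousOn_mul hh hf.2.1 isCompact_Icc

lemma aux_pos {f : ℝ → ℝ} (hf : IsDensity f) {a b : ℝ}
    (ha : 0 ≤ a) (hab : a < b) (hb : b ≤ 1) : 0 < ∫ t in a..b, f t :=
  intervalIntegral.intervalIntegral_pos_of_pos_on (aux_ii hf.2.1 ha hab.le hb)
    (fun x hx => hf.1 x ⟨ha.trans hx.1.le, hx.2.le.trans hb⟩) hab

lemma aux_zero {f : ℝ → ℝ} (hf : IsDensity f) {a b : ℝ}
    (ha : 0 ≤ a) (hab : a < b) (hb : b ≤ 1) :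
    ∫ t in a..b, (t - condMean f a b) * f t = 0 := by
  have h1 : IntervalIntegrable (fun t => t * f t) volume a b :=
    aux_ii (aux_mul hf continuousOn_id) ha hab.le hb
  have h2 := aux_ii hf.2.1 ha hab.le hb
  simp_rw [sub_mul]
  rw [intervalIntegral.integral_sub h1 (h2.const_mul _), intervalIntegral.integral_const_mul,
    condMean, div_mul_cancel₀ _ (aux_pos hf ha hab hb).ne', sub_self]

lemma aux_mean_s5 {f : ℝ → ℝ} (hf : IsDensity f) {a b : ℝ}
    (ha : 0 ≤ a) (hab : a < b) (hb : b ≤ 1) : condMean f a b ∈ Icc a b := by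
  have h1 : IntervalIntegrable (fun t => t * f t) volume a b :=
    aux_ii (aux_mul hf continuousOn_id) ha hab.le hb
  have h2 := aux_ii hf.2.1 ha hab.le hb
  have hp := aux_pos hf ha hab hb
  unfold condMean
  constructor
  · rw [le_div_iff₀ hp, ← intervalIntegral.integral_const_mul]
    refine intervalIntegral.integral_mono_on hab.le (h2.const_mul _) h1 fun x hx => ?_
    exact mul_le_mul_of_nonneg_right hx.1 (hf.1 x ⟨ha.trans hx.1, hx.2.trans hb⟩).le
  · rw [div_le_iff₀ hp, ← intervalIntegral.integral_const_mul]
    refine intervalIntegral.integral_mono_on hab.le h1 (h2.const_mul _) fun x hx => ?_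
    exact mul_le_mul_of_nonneg_right hx.2 (hf.1 x ⟨ha.trans hx.1, hx.2.trans hb⟩).le

lemma aux_comp {P : Set ℝ} (hP : IsPoolingSet P) {θ : ℝ} (hθ : θ ∈ P) :
    0 ≤ compInf P θ ∧ compInf P θ < compSup P θ ∧ compSup P θ ≤ 1 ∧
    connectedComponentIn P θ ⊆ Icc (compInf P θ) (compSup P θ) ∧
    Ioo (compInf P θ) (compSup P θ) ⊆ connectedComponentIn P θ ∧
    ∃ q : ℚ, (q:ℝ) ∈ connectedComponentIn P θ := by
  obtain ⟨U, hU, rfl⟩ := hP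
  set C := connectedComponentIn (U ∩ Icc (0:ℝ) 1) θ with hC
  have hsub : C ⊆ Icc 0 1 := (connectedComponentIn_subset _ _).trans inter_subset_right
  have hmem : θ ∈ C := mem_connectedComponentIn hθ
  have hbb : BddBelow C := bddBelow_Icc.mono hsub
  have hba : BddAbove C := bddAbove_Icc.mono hsub
  have hcon : IsPreconnected C := isPreconnected_connectedComponentIn
  obtain ⟨ε, hε, hball⟩ := Metric.isOpen_iff.1 hU θ hθ.1
  have hI : Ioo (θ - ε) (θ + ε) ∩ Icc 0 1 ⊆ C := by
    apply IsPreconnected.subset_connectedComponentIn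
    · exact (ordConnected_Ioo.inter ordConnected_Icc).isPreconnected
    · exact ⟨⟨by linarith, by linarith⟩, hθ.2⟩
    · exact inter_subset_inter_left _ (by rw [← Real.ball_eq_Ioo]; exact hball)
  have h01 := hθ.2
  have hmm : max (θ - ε) 0 < min (θ + ε) 1 := by
    rw [max_lt_iff, lt_min_iff, lt_min_iff]
    refine ⟨⟨by linarith, by linarith [h01.2]⟩, by linarith [h01.1], by norm_num⟩
  have hI' : Ioo (max (θ - ε) 0) (min (θ + ε) 1) ⊆ C := fun x hx => by
    have h1 := max_lt_iff.1 hx.1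
    have h2 := lt_min_iff.1 hx.2
    exact hI ⟨⟨h1.1, h2.1⟩, h1.2.le, h2.2.le⟩
  obtain ⟨q, hq1, hq2⟩ := exists_rat_btwn hmm
  obtain ⟨r, hr1, hr2⟩ := exists_rat_btwn hq2
  have hqC : (q:ℝ) ∈ C := hI' ⟨hq1, hq2⟩
  have hrC : (r:ℝ) ∈ C := hI' ⟨hq1.trans hr1, hr2⟩
  refine ⟨le_csInf ⟨θ, hmem⟩ fun x hx => (hsub hx).1,
    (csInf_le hbb hqC).trans_lt (hr1.trans_le (le_csSup hba hrC)),
    csSup_le ⟨θ, hmem⟩ fun x hx => (hsub hx).2,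
    fun x hx => ⟨csInf_le hbb hx, le_csSup hba hx⟩, ?_, q, hqC⟩
  exact IsConnected.Ioo_csInf_csSup_subset ⟨⟨θ, hmem⟩, hcon⟩ hbb hba

lemma aux_const {f : ℝ → ℝ} {P : Set ℝ} {θ x : ℝ}
    (hx : x ∈ connectedComponentIn P θ) :
    poolMean f P x = condMean f (compInf P θ) (compSup P θ) := by
  have h := connectedComponentIn_eq hx
  have hxP := connectedComponentIn_subset _ _ hx
  simp only [poolMean, hxP, if_true, compInf, compSup, h]

lemma aux_pm_mem {f : ℝ → ℝ} (hf : IsDensity f) {P : Set ℝ} (hP : IsPoolingSet P) {θ : ℝ}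
    (hθ : θ ∈ Icc (0:ℝ) 1) : poolMean f P θ ∈ Icc (0:ℝ) 1 := by
  unfold poolMean
  split_ifs with h
  · obtain ⟨h1, h2, h3, -⟩ := aux_comp hP h
    exact Icc_subset_Icc h1 h3 (aux_mean_s5 hf h1 h2 h3)
  · exact hθ

/-- The countable family of components of `P`. -/
def compFam (P : Set ℝ) : Set (Set ℝ) :=
  {C | ∃ q : ℚ, (q:ℝ) ∈ P ∧ C = connectedComponentIn P q}

lemma compFam_countable (P : Set ℝ) : (compFam P).Countable :=
  (countable_range fun q : ℚ => connectedComponentIn P (q:ℝ)).mono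
    (by rintro _ ⟨q, -, rfl⟩; exact ⟨q, rfl⟩)

lemma compFam_union {P : Set ℝ} (hP : IsPoolingSet P) : P = ⋃ C : compFam P, (C : Set ℝ) := by
  ext x
  simp only [mem_iUnion, Subtype.exists, exists_prop]
  constructor
  · intro hx
    obtain ⟨-, -, -, -, -, q, hq⟩ := aux_comp hP hx
    refine ⟨connectedComponentIn P x, ⟨q, connectedComponentIn_subset _ _ hq,
      connectedComponentIn_eq hq⟩, mem_connectedComponentIn hx⟩
  · rintro ⟨C, ⟨q, hq, rfl⟩, hx⟩
    exact connectedComponentIn_subset _ _ hx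

lemma compFam_meas {P : Set ℝ} (C : compFam P) : MeasurableSet (C : Set ℝ) := by
  obtain ⟨C, q, hq, rfl⟩ := C
  exact isPreconnected_connectedComponentIn.ordConnected.measurableSet

lemma compFam_disj (P : Set ℝ) :
    Pairwise (Function.onFun Disjoint fun C : compFam P => (C : Set ℝ)) := by
  rintro ⟨C, q, hq, rfl⟩ ⟨D, r, hr, rfl⟩ hne
  rw [Function.onFun, Set.disjoint_left]
  intro x hx hx'
  exact hne (Subtype.ext ((connectedComponentIn_eq hx).trans (connectedComponentIn_eq hx').symm))

lemma pool_subset {P : Set ℝ} (hP : IsPoolingSet P) : P ⊆ Icc (0:ℝ) 1 := by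
  obtain ⟨U, -, rfl⟩ := hP
  exact inter_subset_right

lemma pool_int {f u : ℝ → ℝ} (hf : IsDensity f) (hu : ContinuousOn u (Icc (0:ℝ) 1))
    {P : Set ℝ} (hP : IsPoolingSet P) :
    IntegrableOn (fun θ => u (poolMean f P θ) * f θ) (Icc (0:ℝ) 1) := by
  have hcu : Countable (compFam P) := (compFam_countable P).to_subtype
  obtain ⟨M, hM⟩ := isCompact_Icc.exists_bound_of_continuousOn hu
  have hmeas : AEStronglyMeasurable (fun θ => u (poolMean f P θ) * f θ)
      (volume.restrict (Icc (0:ℝ) 1)) := by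
    have hsplit : Icc (0:ℝ) 1 = P ∪ (Icc 0 1 \ P) := by
      rw [union_sdiff_cancel (pool_subset hP)]
    rw [hsplit, aestronglyMeasurable_union_iff]
    constructor
    · have : AEStronglyMeasurable (fun θ => u (poolMean f P θ) * f θ)
          (volume.restrict (⋃ C : compFam P, (C : Set ℝ))) := by
        rw [aestronglyMeasurable_iUnion_iff]
        rintro ⟨C, q, hq, rfl⟩
        have hs : connectedComponentIn P (q:ℝ) ⊆ Icc 0 1 :=
          (connectedComponentIn_subset _ _).trans (pool_subset hP)
        have h1 : AEStronglyMeasurable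
            (fun θ => u (condMean f (compInf P q) (compSup P q)) * f θ)
            (volume.restrict (connectedComponentIn P (q:ℝ))) :=
          ((hf.2.1.mono_set hs).const_mul _).aestronglyMeasurable
        refine h1.congr ?_
        filter_upwards [ae_restrict_mem (compFam_meas ⟨_, q, hq, rfl⟩)] with x hx
        rw [aux_const hx]
      rwa [← compFam_union hP] at this
    · have h1 := ((aux_mul hf hu).mono_set (sdiff_subset (t := P))).aestronglyMeasurable
      refine h1.congr ?_
      filter_upwards [ae_restrict_mem (measurableSet_Icc.diff (pool_meas hP))] with x hx
      simp [poolMean, hx.2]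
  refine Integrable.mono' (hf.2.1.const_mul M) hmeas ?_
  filter_upwards [ae_restrict_mem measurableSet_Icc] with x hx
  rw [norm_mul, Real.norm_of_nonneg (hf.1 x hx).le]
  exact mul_le_mul_of_nonneg_right (hM _ (aux_pm_mem hf hP hx)) (hf.1 x hx).le

lemma pool_empty : IsPoolingSet ∅ := ⟨∅, isOpen_empty, by simp⟩

lemma pool_diff {f u : ℝ → ℝ} (hf : IsDensity f) (hu : ContinuousOn u (Icc (0:ℝ) 1))
    {P : Set ℝ} (hP : IsPoolingSet P) :
    IntegrableOn (fun θ => (u θ - u (poolMean f P θ)) * f θ) (Icc (0:ℝ) 1) ∧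
    poolValue f u ∅ - poolValue f u P = ∫ θ in P, (u θ - u (poolMean f P θ)) * f θ := by
  have h0 := aux_mul hf hu
  have h1 := pool_int hf hu hP
  have hint : IntegrableOn (fun θ => (u θ - u (poolMean f P θ)) * f θ) (Icc (0:ℝ) 1) := by
    simp_rw [sub_mul]; exact h0.sub h1
  refine ⟨hint, ?_⟩
  have e : poolValue f u ∅ - poolValue f u P
      = ∫ θ in Icc (0:ℝ) 1, (u θ - u (poolMean f P θ)) * f θ := by
    simp_rw [sub_mul]
    rw [integral_sub h0 h1, integral_Icc_eq_integral_Ioc, integral_Icc_eq_integral_Ioc]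
    simp [poolValue, poolMean, intervalIntegral.integral_of_le]
  rw [e]
  refine setIntegral_eq_of_subset_of_forall_sdiff_eq_zero measurableSet_Icc (pool_subset hP) ?_
  intro x hx
  simp [poolMean, hx.2]

lemma aux_sep {f u u' u'' : ℝ → ℝ} (hf : IsDensity f) (hu : C1AC u u' u'')
    (h : ∀ᵐ θ ∂(volume.restrict (Icc (0:ℝ) 1)), 0 ≤ u'' θ) {P : Set ℝ} (hP : IsPoolingSet P) :
    poolValue f u P ≤ poolValue f u ∅ := by
  obtain ⟨hd, hc', hi, hftc⟩ := hu
  have hc : ContinuousOn u (Icc (0:ℝ) 1) :=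
    fun x hx => (hd x hx).continuousAt.continuousWithinAt
  have hmono : MonotoneOn u' (Icc (0:ℝ) 1) := by
    intro x hx y hy hxy
    rw [hftc x hx, hftc y hy, ← intervalIntegral.integral_add_adjacent_intervals
      (aux_ii hi le_rfl hx.1 hx.2) (aux_ii hi hx.1 hxy hy.2)]
    have : 0 ≤ ∫ t in x..y, u'' t := by
      apply intervalIntegral.integral_nonneg_of_ae_restrict hxy
      exact ae_restrict_of_ae_restrict_of_subset (Icc_subset_Icc hx.1 hy.2) h
    linarith
  obtain ⟨hint, hdiff⟩ := pool_diff hf hc hP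
  rw [← sub_nonneg, hdiff]
  have hcu : Countable (compFam P) := (compFam_countable P).to_subtype
  have hi2 := hint.mono_set (pool_subset hP)
  have key : 0 ≤ ∫ θ in ⋃ C : compFam P, (C : Set ℝ), (u θ - u (poolMean f P θ)) * f θ := by
    rw [integral_iUnion compFam_meas (compFam_disj P) (by rwa [← compFam_union hP])]
    refine tsum_nonneg ?_
    rintro ⟨C, q, hq, rfl⟩
    obtain ⟨h1, h2, h3, h4, h5, -⟩ := aux_comp hP hq
    set a := compInf P q
    set b := compSup P q
    have hm := aux_mean_s5 hf h1 h2 h3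
    have hz := aux_zero hf h1 h2 h3
    set m := condMean f a b with hmdef
    have hae : connectedComponentIn P (q:ℝ) =ᵐ[volume] Ioc a b := by
      refine (Filter.EventuallyLE.antisymm ?_ ?_)
      · exact (LE.le.eventuallyLE h4).trans Ioc_ae_eq_Icc.symm.le
      · exact Ioo_ae_eq_Ioc.symm.le.trans (LE.le.eventuallyLE h5)
    have e1 : ∫ θ in connectedComponentIn P (q:ℝ), (u θ - u (poolMean f P θ)) * f θ
        = ∫ θ in a..b, (u θ - u m) * f θ := by
      rw [setIntegral_congr_fun (g := fun θ => (u θ - u m) * f θ)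
        (compFam_meas ⟨_, q, hq, rfl⟩)
        (fun x hx => by simp only [aux_const hx]; rfl),
        setIntegral_congr_set hae, intervalIntegral.integral_of_le h2.le]
    change 0 ≤ ∫ θ in connectedComponentIn P (q:ℝ), (u θ - u (poolMean f P θ)) * f θ
    rw [e1]
    have e2 : ∫ θ in a..b, u' m * ((θ - m) * f θ) = 0 := by
      rw [intervalIntegral.integral_const_mul, hz, mul_zero]
    rw [← e2]
    refine intervalIntegral.integral_mono_on h2.le ?_ ?_ ?_
    · exact (aux_ii (aux_mul hf (continuousOn_id.sub continuousOn_const)) h1 h2.le h3).const_mul _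
    · exact aux_ii (aux_mul hf (hc.sub continuousOn_const)) h1 h2.le h3
    · intro x hx
      have hx' : x ∈ Icc (0:ℝ) 1 := Icc_subset_Icc h1 h3 hx
      have := aux_tangent hd hmono (Icc_subset_Icc h1 h3 hm) hx'
      rw [← mul_assoc]
      exact mul_le_mul_of_nonneg_right (by linarith) (hf.1 x hx').le
  rwa [← compFam_union hP] at key

lemma aux_conv {f u u' u'' : ℝ → ℝ} (hf : IsDensity f) (hu : C1AC u u' u'')
    {a b : ℝ} (ha : 0 ≤ a) (hab : a < b) (hb : b ≤ 1)
    (hneg : ∀ᵐ θ ∂(volume.restrict (Icc (0:ℝ) 1)), θ ∈ Icc a b → u'' θ < 0) :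
    poolValue f u ∅ < poolValue f u (Ioo a b) := by
  obtain ⟨hd, hc', hi, hftc⟩ := hu
  have hc : ContinuousOn u (Icc (0:ℝ) 1) :=
    fun x hx => (hd x hx).continuousAt.continuousWithinAt
  have hsub : Icc a b ⊆ Icc 0 1 := Icc_subset_Icc ha hb
  have hanti : StrictAntiOn u' (Icc a b) := by
    intro x hx y hy hxy
    have hxyi := aux_ii hi (hsub hx).1 hxy.le (hsub hy).2
    rw [hftc x (hsub hx), hftc y (hsub hy), ← intervalIntegral.integral_add_adjacent_intervals
      (aux_ii hi le_rfl (hsub hx).1 (hsub hx).2) hxyi]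
    have : ∫ t in x..y, u'' t < ∫ t in x..y, (0:ℝ) := by
      refine intervalIntegral.integral_lt_integral_of_ae_le_of_measure_setOfPred_lt_ne_zero
        hxy.le hxyi (by simp) ?_ ?_
      · have h1 := ae_restrict_of_ae_restrict_of_subset
          (Ioc_subset_Icc_self.trans (Icc_subset_Icc (hsub hx).1 (hsub hy).2) :
            Ioc x y ⊆ Icc 0 1) hneg
        filter_upwards [h1, ae_restrict_mem measurableSet_Ioc] with t ht ht'
        exact (ht ⟨hx.1.trans ht'.1.le, ht'.2.trans hy.2⟩).le
      · have h1 := ae_restrict_of_ae_restrict_of_subset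
          (Ioc_subset_Icc_self.trans (Icc_subset_Icc (hsub hx).1 (hsub hy).2) :
            Ioc x y ⊆ Icc 0 1) hneg
        have h2 : ∀ᵐ t ∂(volume.restrict (Ioc x y)), u'' t < 0 := by
          filter_upwards [h1, ae_restrict_mem measurableSet_Ioc] with t ht ht'
          exact ht ⟨hx.1.trans ht'.1.le, ht'.2.trans hy.2⟩
        rw [measure_eq_measure_of_null_sdiff (subset_univ _) (by
          rw [← compl_eq_univ_sdiff]; exact h2)]
        simp [hxy]
    simp at this
    linarith
  have hP : IsPoolingSet (Ioo a b) := ⟨Ioo a b, isOpen_Ioo,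
    (inter_eq_left.2 (Ioo_subset_Icc_self.trans hsub)).symm⟩
  obtain ⟨hint, hdiff⟩ := pool_diff hf hc hP
  rw [← sub_neg, hdiff]
  have hm := aux_mean_s5 hf ha hab hb
  have hz := aux_zero hf ha hab hb
  set m := condMean f a b with hmdef
  have hpm : ∀ x ∈ Ioo a b, poolMean f (Ioo a b) x = m := by
    intro x hx
    simp only [poolMean, hx, if_true, compInf, compSup,
      isPreconnected_Ioo.connectedComponentIn hx, csInf_Ioo hab, csSup_Ioo hab, hmdef]
  rw [setIntegral_congr_fun (g := fun θ => (u θ - u m) * f θ) measurableSet_Ioo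
    (fun x hx => by simp only [hpm x hx]), ← integral_Ioc_eq_integral_Ioo,
    ← intervalIntegral.integral_of_le hab.le]
  have e2 : ∫ θ in a..b, u' m * ((θ - m) * f θ) = 0 := by
    rw [intervalIntegral.integral_const_mul, hz, mul_zero]
  rw [← e2]
  have hlt : ∀ x ∈ Icc a b, x ≠ m → (u x - u m) * f x < u' m * ((x - m) * f x) := by
    intro x hx hne
    have := aux_tangent_strict (fun x hx => hd x (hsub hx)) hanti hm hx hne
    rw [← mul_assoc]
    exact mul_lt_mul_of_pos_right (by linarith) (hf.1 x (hsub hx))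
  have hae : ∀ᵐ x ∂(volume.restrict (Ioc a b)), (u x - u m) * f x < u' m * ((x - m) * f x) := by
    filter_upwards [ae_restrict_mem measurableSet_Ioc,
      ae_restrict_of_ae (Measure.ae_ne volume m)] with x hx hne
    exact hlt x (Ioc_subset_Icc_self hx) hne
  refine intervalIntegral.integral_lt_integral_of_ae_le_of_measure_setOfPred_lt_ne_zero
    hab.le ?_ ?_ (hae.mono fun _ h => h.le) ?_
  · exact aux_ii (aux_mul hf (hc.sub continuousOn_const)) ha hab.le hb
  · exact (aux_ii (aux_mul hf (continuousOn_id.sub continuousOn_const)) ha hab.le hb).const_mul _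
  · rw [measure_eq_measure_of_null_sdiff (subset_univ _) (by
      rw [← compl_eq_univ_sdiff]; exact hae)]
    simp [hab]

/-- full separation (the empty pooling set) is optimal for `u` iff
`u''(θ) ≥ 0` for almost all `θ ∈ [0,1]`. Here `u''` is assumed to agree a.e.
with a function continuous at all but finitely many points of `[0,1]`. -/
theorem separation_optimal_iff (f : ℝ → ℝ) (hf : IsDensity f)
    (u u' u'' : ℝ → ℝ) (hu : C1AC u u' u'')
    (hreg : ∃ g : ℝ → ℝ, u'' =ᵐ[volume.restrict (Icc (0:ℝ) 1)] g ∧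
      ∃ s : Set ℝ, s.Finite ∧ ∀ θ ∈ Icc (0:ℝ) 1, θ ∉ s →
        ContinuousWithinAt g (Icc (0:ℝ) 1) θ) :
    IsOptimal f u (∅ : Set ℝ) ↔
      ∀ᵐ θ ∂(volume.restrict (Icc (0:ℝ) 1)), 0 ≤ u'' θ := by
  constructor
  · intro hopt
    obtain ⟨g, hg, s, hs, hcont⟩ := hreg
    have hpos : ∀ θ ∈ Icc (0:ℝ) 1, θ ∉ s → θ ≠ 0 → θ ≠ 1 → 0 ≤ g θ := by
      intro θ hθ hθs h0 h1
      by_contra! hlt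
      have hn : Icc (0:ℝ) 1 ∈ nhds θ :=
        Icc_mem_nhds (lt_of_le_of_ne hθ.1 h0.symm) (lt_of_le_of_ne hθ.2 h1)
      have hca : ContinuousAt g θ := (hcont θ hθ hθs).continuousAt hn
      have hev := (hca.eventually_lt_const hlt).and hn
      obtain ⟨ε, hε, hball⟩ := Metric.nhds_basis_closedBall.eventually_iff.1 hev
      rw [Real.closedBall_eq_Icc] at hball
      have ha := (hball (left_mem_Icc.2 (by linarith : θ - ε ≤ θ + ε))).2
      have hb := (hball (right_mem_Icc.2 (by linarith : θ - ε ≤ θ + ε))).2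
      have hP : IsPoolingSet (Ioo (θ - ε) (θ + ε)) := ⟨_, isOpen_Ioo,
        (inter_eq_left.2 (Ioo_subset_Icc_self.trans (Icc_subset_Icc ha.1 hb.2))).symm⟩
      refine absurd (hopt.2 _ hP) (not_le.2 ?_)
      refine aux_conv hf hu ha.1 (by linarith) hb.2 ?_
      filter_upwards [hg] with t ht htI
      rw [ht]
      exact (hball htI).1
    have hfin : ∀ᵐ θ ∂(volume.restrict (Icc (0:ℝ) 1)), θ ∉ s :=
      ae_restrict_of_ae (measure_eq_zero_iff_ae_notMem.1 (hs.measure_zero volume))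
    filter_upwards [hg, hfin, ae_restrict_mem measurableSet_Icc,
      ae_restrict_of_ae (Measure.ae_ne volume (0:ℝ)),
      ae_restrict_of_ae (Measure.ae_ne volume (1:ℝ))] with θ h1 h2 h3 h4 h5
    rw [h1]
    exact hpos θ h3 h2 h4 h5
  · intro h
    exact ⟨pool_empty, fun Q hQ => aux_sep hf hu h hQ⟩
end
end
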